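/- For every k∈ℕ, the k-bounded state reachability problem for DCPSs is decidable: for every DCPS M=(Q,Γ,Δ,q₀,γ₀) and every set F⊆Q, it is decidable whether there exists a state q∈F that is k-bounded reachable by M. -/

import Mathlib

namespace DCPSFormal

/-- Rules of a dynamic network of concurrent pushdown systems (DCPS):
creation rules `⟨q,γ⟩ → ⟨q',u⟩ ▷ α` (with `α = none` meaning `ε`),
interruption rules `⟨q,γ⟩ ↦ ⟨q',u⟩`, and resumption rules `q ↦ q' ◁ γ`. -/
inductive Rule (Q Γ : Type*) where
  | cr : Q → Γ → Q → List Γ → Option Γ → Rule Q Γ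
  | intr : Q → Γ → Q → List Γ → Rule Q Γ
  | res : Q → Γ → Q → Rule Q Γ

/-- A DCPS: a set of rules, an initial state and an initial stack symbol. -/
structure DCPS (Q Γ : Type*) where
  rules : Set (Rule Q Γ)
  q0 : Q
  γ0 : Γ

/-- Well-formedness of a DCPS: every pushed word has length at most 2. -/
def IsDCPSWf {Q Γ : Type*} (M : DCPS Q Γ) : Prop :=
  ∀ r ∈ M.rules,
    match r with
    | .cr _ _ _ u _ => u.length ≤ 2
    | .intr _ _ _ u => u.length ≤ 2
    | .res _ _ _ => True

/-- A DCFS is a DCPS in which every pushed word has length at most 1. -/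
def IsDCFS {Q Γ : Type*} (M : DCPS Q Γ) : Prop :=
  ∀ r ∈ M.rules,
    match r with
    | .cr _ _ _ u _ => u.length ≤ 1
    | .intr _ _ _ u => u.length ≤ 1
    | .res _ _ _ => True

/-- A configuration of a DCPS: global state, optional active local configuration
(stack content and switch number), and a finitely supported multiset of pending
local configurations. -/
structure Config (Q Γ : Type*) where
  state : Q
  active : Option (List Γ × ℕ)
  idle : (List Γ × ℕ) →₀ ℕ

/-- The thread possibly spawned by a creation rule with creation component `α`
when the active thread has switch number `i`. -/
noncomputable def spawnOf {Γ : Type*} (α : Option Γ) (i : ℕ) : (List Γ × ℕ) →₀ ℕ :=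
  match α with
  | none => 0
  | some a => Finsupp.single ([a], i + 1) 1

/-- The transition system `T(M)` of a DCPS, with steps labelled by rules. -/
inductive Step {Q Γ : Type*} (M : DCPS Q Γ) : Rule Q Γ → Config Q Γ → Config Q Γ → Prop
  | cr {q γ q' u α w i V} :
      Rule.cr q γ q' u α ∈ M.rules →
      Step M (.cr q γ q' u α) ⟨q, some (γ :: w, i), V⟩ ⟨q', some (u ++ w, i), V + spawnOf α i⟩
  | intr {q γ q' u w i V} :
      Rule.intr q γ q' u ∈ M.rules →
      Step M (.intr q γ q' u) ⟨q, some (γ :: w, i), V⟩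
        ⟨q', none, V + Finsupp.single (u ++ w, i + 1) 1⟩
  | res {q γ q' w i V} :
      Rule.res q γ q' ∈ M.rules →
      Step M (.res q γ q') ⟨q, none, V + Finsupp.single (γ :: w, i) 1⟩ ⟨q', some (γ :: w, i), V⟩

/-- `c ∈ Conf_I(M)`: the active thread exists and its switch number lies in `I`. -/
def ActiveIn {Q Γ : Type*} (I : Set ℕ) (c : Config Q Γ) : Prop :=
  ∃ w i, c.active = some (w, i) ∧ i ∈ I

/-- The `I`-bounded transition system `T_I(M)`. -/
def StepIn {Q Γ : Type*} (M : DCPS Q Γ) (I : Set ℕ) (r : Rule Q Γ) (c c' : Config Q Γ) : Prop :=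
  Step M r c c' ∧ (ActiveIn I c ∨ ActiveIn I c')

/-- Reachability in `T(M)`. -/
def Reaches {Q Γ : Type*} (M : DCPS Q Γ) : Config Q Γ → Config Q Γ → Prop :=
  Relation.ReflTransGen (fun a b => ∃ r, Step M r a b)

/-- Reachability in `T_I(M)`. -/
def ReachesIn {Q Γ : Type*} (M : DCPS Q Γ) (I : Set ℕ) : Config Q Γ → Config Q Γ → Prop :=
  Relation.ReflTransGen (fun a b => ∃ r, StepIn M I r a b)

/-- The initial configuration of a DCPS. -/
noncomputable def initConfig {Q Γ : Type*} (M : DCPS Q Γ) : Config Q Γ :=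
  ⟨M.q0, none, Finsupp.single ([M.γ0], 0) 1⟩

/-- `q` is reachable by `M`. -/
def StateReachable {Q Γ : Type*} (M : DCPS Q Γ) (q : Q) : Prop :=
  ∃ c, Reaches M (initConfig M) c ∧ c.active = none ∧ c.state = q

/-- `q` is `k`-bounded reachable by `M`. -/
def KBoundedReachable {Q Γ : Type*} (M : DCPS Q Γ) (k : ℕ) (q : Q) : Prop :=
  ∃ c, ReachesIn M {i | i ≤ k} (initConfig M) c ∧ c.active = none ∧ c.state = q

/-- `q` is `k`-stratified reachable by `M`. -/
def KStratifiedReachable {Q Γ : Type*} (M : DCPS Q Γ) (k : ℕ) (q : Q) : Prop :=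
  ∃ c : ℕ → Config Q Γ, c 0 = initConfig M ∧
    (∀ l ≤ k, ReachesIn M {l} (c l) (c (l + 1))) ∧
    (c (k + 1)).active = none ∧ (c (k + 1)).state = q

/-- A labelled run in a labelled transition system. -/
inductive LRun {C L : Type*} (step : L → C → C → Prop) : List L → C → C → Prop
  | nil (c) : LRun step [] c c
  | cons {l τ c c' c''} : step l c c' → LRun step τ c' c'' → LRun step (l :: τ) c c''

/-- A pushdown automaton with states `S`, input alphabet `A` and stack alphabet `Γ`. -/
structure PDA (S A Γ : Type*) where
  trans : Set ((S × Γ) × Option A × (S × List Γ))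
  p0 : S
  γ0 : Γ
  final : Set S

/-- A single (possibly `ε`-labelled) step of a PDA. -/
inductive PDAStep {S A Γ : Type*} (P : PDA S A Γ) :
    Option A → (S × List Γ) → (S × List Γ) → Prop
  | mk {p γ a p' u w} : ((p, γ), a, (p', u)) ∈ P.trans →
      PDAStep P a (p, γ :: w) (p', u ++ w)

/-- A run of a PDA labelled by the word obtained by concatenating all non-`ε` labels. -/
inductive PDATrace {S A Γ : Type*} (P : PDA S A Γ) :
    List A → (S × List Γ) → (S × List Γ) → Prop
  | nil (c) : PDATrace P [] c c
  | eps {v c c' c''} : PDAStep P none c c' → PDATrace P v c' c'' → PDATrace P v c c''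
  | cons {a v c c' c''} : PDAStep P (some a) c c' → PDATrace P v c' c'' →
      PDATrace P (a :: v) c c''

/-- The language of a PDA (acceptance by final state). -/
def PDALang {S A Γ : Type*} (P : PDA S A Γ) : Set (List A) :=
  { v | ∃ p w, p ∈ P.final ∧ PDATrace P v (P.p0, [P.γ0]) (p, w) }

/-- A finite state automaton. -/
structure FSA (S A : Type*) where
  trans : Set (S × Option A × S)
  init : Set S
  final : Set S

/-- A run of an FSA labelled by a word (`ε`-labels contribute nothing). -/
inductive FSARun {S A : Type*} (Au : FSA S A) : List A → S → S → Prop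
  | nil (s) : FSARun Au [] s s
  | eps {v s s' s''} : (s, none, s') ∈ Au.trans → FSARun Au v s' s'' → FSARun Au v s s''
  | cons {a v s s' s''} : (s, some a, s') ∈ Au.trans → FSARun Au v s' s'' →
      FSARun Au (a :: v) s s''

/-- The language of an FSA. -/
def FSALang {S A : Type*} (Au : FSA S A) : Set (List A) :=
  { v | ∃ s ∈ Au.init, ∃ s' ∈ Au.final, FSARun Au v s s' }

/-- A vector addition system with states of dimension `n`. -/
structure VASS (n : ℕ) (S A : Type*) where
  δ : S → A → S × (Fin n → ℤ)
  s0 : S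
  v0 : Fin n → ℕ

/-- A step of a VASS: `(q₁,u₁) →ᵃ (q₂,u₂)` iff `δ(q₁,a) = (q₂, u₂ - u₁)`. -/
def VStep {n : ℕ} {S A : Type*} (V : VASS n S A) (a : A) :
    (S × (Fin n → ℕ)) → (S × (Fin n → ℕ)) → Prop :=
  fun c c' => (V.δ c.1 a).1 = c'.1 ∧ ∀ i, (c'.2 i : ℤ) = (c.2 i : ℤ) + (V.δ c.1 a).2 i

/-- Reachability in the transition system of a VASS. -/
def VReaches {n : ℕ} {S A : Type*} (V : VASS n S A) :
    (S × (Fin n → ℕ)) → (S × (Fin n → ℕ)) → Prop :=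
  Relation.ReflTransGen (fun c c' => ∃ a, VStep V a c c')

/-- A state `s` is reachable by the VASS `V`. -/
def VStateReachable {n : ℕ} {S A : Type*} (V : VASS n S A) (s : S) : Prop :=
  ∃ u, VReaches V (V.s0, V.v0) (s, u)

/-- The `i`-th unit vector. -/
def unitVec {m : ℕ} (i : Fin m) : Fin m → ℤ := fun j => if j = i then 1 else 0

/-- Encoded rules of a DCPS over natural-number states and stack symbols:
`inl` encodes a creation rule, `inr (inl _)` an interruption rule, and
`inr (inr _)` a resumption rule. -/
abbrev RuleE := ((ℕ × ℕ) × (ℕ × List ℕ) × Option ℕ) ⊕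
  (((ℕ × ℕ) × (ℕ × List ℕ)) ⊕ (ℕ × ℕ × ℕ))

/-- Decoding an encoded rule. -/
def decodeRule : RuleE → Rule ℕ ℕ
  | .inl ((q, γ), (q', u), α) => .cr q γ q' u α
  | .inr (.inl ((q, γ), (q', u))) => .intr q γ q' u
  | .inr (.inr (q, γ, q')) => .res q γ q'

/-- An instance of the reachability problems: a finite list of rules, an initial
state and an initial stack symbol, and a target set `F` given as a list of states. -/
abbrev Inst := List RuleE × (ℕ × ℕ) × List ℕ

/-- The DCPS described by an instance. -/
def instDCPS (x : Inst) : DCPS ℕ ℕ where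
  rules := { r | ∃ e ∈ x.1, decodeRule e = r }
  q0 := x.2.1.1
  γ0 := x.2.1.2

/-! A predicate is decidable once it and its complement are recursively enumerable. Reachability
is enumerated by searching for a run. Unreachability is certified by a backward search in which a
pending thread is replaced by its schedule: the global states at which it is resumed and
interrupted, together with the threads it spawns. Demands for schedules are ordered by embedding,
which is a well quasi-order because the number of context switches is bounded (Higman), so the set
of demands that lead to the target has a finite basis. Such a basis is checked by local closure
conditions, and these only require enumerating the schedules a thread can *not* produce: a
pushdown unreachability problem, certified by a finite automaton saturated under the rules.
-/

section Enumerability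

open Encodable
open scoped List

attribute [fun_prop] Primrec PrimrecPred REPred
attribute [fun_prop] Primrec.id Primrec.const Primrec.comp Primrec.pair

variable {α β γ δ : Type*} [Primcodable α] [Primcodable β] [Primcodable γ] [Primcodable δ]

@[fun_prop]
theorem primrec_fst {f : α → β × γ} (hf : Primrec f) : Primrec fun a => (f a).1 :=
  Primrec.fst.comp hf

@[fun_prop]
theorem primrec_snd {f : α → β × γ} (hf : Primrec f) : Primrec fun a => (f a).2 :=
  Primrec.snd.comp hf

@[fun_prop]
theorem primrecPred_eq {f g : α → β} (hf : Primrec f) (hg : Primrec g) :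
    PrimrecPred fun a => f a = g a := by
  have : DecidableEq β := decidableEqOfEncodable β
  exact Primrec.eq.comp hf hg

@[fun_prop]
theorem primrecPred_le {f g : α → ℕ} (hf : Primrec f) (hg : Primrec g) :
    PrimrecPred fun a => f a ≤ g a :=
  Primrec.nat_le.comp hf hg

attribute [fun_prop] PrimrecPred.or PrimrecPred.and

theorem rePred_iff_exists_primrecPred {p : α → Prop} :
    REPred p ↔ ∃ q : α × ℕ → Prop, PrimrecPred q ∧ ∀ a, p a ↔ ∃ n, q (a, n) := by
  classical
  constructor
  · intro hp
    obtain ⟨c, hc⟩ := Nat.Partrec.Code.exists_code.1 hp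
    refine ⟨fun z => (c.evaln z.2 (encode z.1)).isSome = true, ?_, fun a => ?_⟩
    · exact primrecPred_eq (Primrec.option_isSome.comp <| Nat.Partrec.Code.primrec_evaln.comp <|
        (Primrec.snd.pair (.const c)).pair (Primrec.encode.comp .fst)) (.const true)
    · simp only [Option.isSome_iff_exists]
      rw [exists_comm]
      simp only [← Option.mem_def, ← Nat.Partrec.Code.evaln_complete, hc]
      simp [Part.mem_assert_iff]
  · rintro ⟨q, hq, hpq⟩
    have hf : Primrec₂ fun (a : α) (n : ℕ) => if q (a, n) then some () else none :=
      Primrec.ite hq (Primrec.const _) (Primrec.const _)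
    refine (Partrec.dom_re (Partrec.rfindOpt hf.to_comp)).of_eq fun a => ?_
    simp [Nat.rfindOpt_dom, hpq]

@[fun_prop]
theorem rePred_of_primrecPred {p : α → Prop} (hp : PrimrecPred p) : REPred p :=
  hp.computablePred.to_re

@[fun_prop]
theorem rePred_const (p : Prop) : REPred fun _ : α => p := by
  classical
  exact (rePred_of_primrecPred <| primrecPred_eq (.const (decide p)) (.const true)).of_eq fun _ =>
    decide_eq_true_iff

@[fun_prop]
theorem rePred_not {p : α → Prop} (hp : PrimrecPred p) : REPred fun a => ¬p a :=
  rePred_of_primrecPred hp.not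

@[fun_prop]
theorem rePred_comp {p : β → Prop} {f : α → β} (hp : REPred p) (hf : Primrec f) :
    REPred fun a => p (f a) :=
  Partrec.comp hp hf.to_comp

@[fun_prop]
theorem rePred_exists {p : α → β → Prop} (hp : REPred fun z : α × β => p z.1 z.2) :
    REPred fun a => ∃ b, p a b := by
  obtain ⟨q, hq, hpq⟩ := rePred_iff_exists_primrecPred.1 hp
  refine rePred_iff_exists_primrecPred.2
    ⟨fun z => ∃ w ∈ (decode (α := β × ℕ) z.2).toList, q ((z.1, w.1), w.2), ?_, fun a => ?_⟩
  · have hq' : PrimrecRel fun (w : β × ℕ) (a : α) => q ((a, w.1), w.2) :=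
      hq.comp (f := fun z : (β × ℕ) × α => ((z.2, z.1.1), z.1.2)) (by fun_prop)
    exact hq'.exists_mem_list.comp
      (Primrec.optionToList.comp (Primrec.decode.comp Primrec.snd)) Primrec.fst
  · constructor
    · rintro ⟨b, hb⟩
      obtain ⟨n, hn⟩ := (hpq (a, b)).1 hb
      exact ⟨encode (b, n), by simpa using hn⟩
    · rintro ⟨m, w, -, hw⟩
      exact ⟨w.1, (hpq (a, w.1)).2 ⟨w.2, hw⟩⟩

@[fun_prop]
theorem rePred_and {p q : α → Prop} (hp : REPred p) (hq : REPred q) :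
    REPred fun a => p a ∧ q a := by
  obtain ⟨p', hp', hpp'⟩ := rePred_iff_exists_primrecPred.1 hp
  obtain ⟨q', hq', hqq'⟩ := rePred_iff_exists_primrecPred.1 hq
  have h : REPred fun a => ∃ m n, p' (a, m) ∧ q' (a, n) :=
    rePred_exists <| rePred_exists <| rePred_of_primrecPred <|
      .and (hp'.comp (by fun_prop)) (hq'.comp (by fun_prop))
  exact h.of_eq fun a => by simp [hpp', hqq']

@[fun_prop]
theorem rePred_or {p q : α → Prop} (hp : REPred p) (hq : REPred q) :
    REPred fun a => p a ∨ q a := by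
  obtain ⟨p', hp', hpp'⟩ := rePred_iff_exists_primrecPred.1 hp
  obtain ⟨q', hq', hqq'⟩ := rePred_iff_exists_primrecPred.1 hq
  have h : REPred fun a => ∃ n, p' (a, n) ∨ q' (a, n) :=
    rePred_exists <| rePred_of_primrecPred <| hp'.or hq'
  exact h.of_eq fun a => by simp [hpp', hqq', exists_or]

@[fun_prop]
theorem rePred_imp {p q : α → Prop} (hp : PrimrecPred p) (hq : REPred q) :
    REPred fun a => p a → q a :=
  (rePred_or (rePred_of_primrecPred hp.not) hq).of_eq fun _ => imp_iff_not_or.symm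

@[fun_prop]
theorem rePred_forall_mem {f : α → List β} {p : α → β → Prop} (hf : Primrec f)
    (hp : REPred fun z : α × β => p z.1 z.2) : REPred fun a => ∀ b ∈ f a, p a b := by
  obtain ⟨q, hq, hpq⟩ := rePred_iff_exists_primrecPred.1 hp
  have hbdd : PrimrecRel fun (l : List ℕ) (z : α × β) => ∃ m ∈ l, q (z, m) :=
    PrimrecRel.exists_mem_list (R := fun m z => q (z, m))
      (hq.comp (f := fun z : ℕ × α × β => (z.2, z.1)) (by fun_prop))
  have hall : PrimrecRel fun (l : List β) (z : α × ℕ) =>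
      ∀ b ∈ l, ∃ m ∈ List.range z.2, q ((z.1, b), m) :=
    PrimrecRel.forall_mem_list (hbdd.comp (f := fun z : β × α × ℕ => List.range z.2.2)
      (g := fun z => (z.2.1, z.1)) (Primrec.list_range.comp (by fun_prop)) (by fun_prop))
  refine (rePred_exists (p := fun a n => ∀ b ∈ f a, ∃ m ∈ List.range n, q ((a, b), m)) <|
    rePred_of_primrecPred <| hall.comp (hf.comp Primrec.fst) Primrec.id).of_eq fun a => ?_
  constructor
  · rintro ⟨n, hn⟩ b hb
    obtain ⟨m, -, hm⟩ := hn b hb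
    exact (hpq (a, b)).2 ⟨m, hm⟩
  · intro h
    choose! m hm using fun b hb => (hpq (a, b)).1 (h b hb)
    obtain ⟨N, hN⟩ := ((f a).map m).toFinset.bddAbove
    refine ⟨N + 1, fun b hb => ⟨m b, List.mem_range.2 (Nat.lt_succ_of_le (hN ?_)), hm b hb⟩⟩
    simpa using ⟨b, hb, rfl⟩

@[fun_prop]
theorem primrecPred_mem {f : α → β} {g : α → List β} (hf : Primrec f) (hg : Primrec g) :
    PrimrecPred fun a => f a ∈ g a := by
  have h : PrimrecRel fun (l : List β) (b : β) => ∃ a ∈ l, a = b :=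
    .exists_mem_list (primrecPred_eq Primrec.fst Primrec.snd)
  exact (h.comp hg hf).of_eq fun a => by simp

@[fun_prop]
theorem primrec_cons {f : α → β} {g : α → List β} (hf : Primrec f) (hg : Primrec g) :
    Primrec fun a => f a :: g a :=
  Primrec.list_cons.comp hf hg

@[fun_prop]
theorem primrec_append {f g : α → List β} (hf : Primrec f) (hg : Primrec g) :
    Primrec fun a => f a ++ g a :=
  Primrec.list_append.comp hf hg

@[fun_prop]
theorem primrec_add_one {f : α → ℕ} (hf : Primrec f) : Primrec fun a => f a + 1 :=
  Primrec.succ.comp hf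

@[fun_prop]
theorem primrec_inl {f : α → β} (hf : Primrec f) : Primrec fun a => (Sum.inl (f a) : β ⊕ γ) :=
  Primrec.sumInl.comp hf

@[fun_prop]
theorem primrec_inr {f : α → γ} (hf : Primrec f) : Primrec fun a => (Sum.inr (f a) : β ⊕ γ) :=
  Primrec.sumInr.comp hf

@[fun_prop]
theorem primrec_some {f : α → β} (hf : Primrec f) : Primrec fun a => some (f a) :=
  Primrec.option_some.comp hf

@[fun_prop]
theorem primrec_toList {f : α → Option β} (hf : Primrec f) : Primrec fun a => (f a).toList :=
  Primrec.optionToList.comp hf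

@[fun_prop]
theorem primrec_map {f : α → List β} {g : α → β → γ} (hf : Primrec f)
    (hg : Primrec fun z : α × β => g z.1 z.2) : Primrec fun a => (f a).map (g a) :=
  Primrec.list_map hf hg

@[fun_prop]
theorem primrec_flatMap {f : α → List β} {g : α → β → List γ} (hf : Primrec f)
    (hg : Primrec fun z : α × β => g z.1 z.2) : Primrec fun a => (f a).flatMap (g a) :=
  Primrec.list_flatMap hf hg

@[fun_prop]
theorem primrec_foldl {f : α → List β} {g : α → γ} {h : α → γ → β → γ} (hf : Primrec f)
    (hg : Primrec g) (hh : Primrec fun z : α × γ × β => h z.1 z.2.1 z.2.2) :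
    Primrec fun a => (f a).foldl (h a) (g a) :=
  Primrec.list_foldl hf hg (h := fun a z => h a z.1 z.2) hh

@[fun_prop]
theorem primrec_ite {p : α → Prop} [DecidablePred p] {f g : α → β} (hp : PrimrecPred p)
    (hf : Primrec f) (hg : Primrec g) : Primrec fun a => if p a then f a else g a :=
  Primrec.ite hp hf hg

@[fun_prop]
theorem primrec_range {f : α → ℕ} (hf : Primrec f) : Primrec fun a => List.range (f a) :=
  Primrec.list_range.comp hf

@[fun_prop]
theorem primrec_length {f : α → List β} (hf : Primrec f) : Primrec fun a => (f a).length :=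
  Primrec.list_length.comp hf

@[fun_prop]
theorem primrec_drop {f : α → List β} {n : α → ℕ} (hn : Primrec n) (hf : Primrec f) :
    Primrec fun a => (f a).drop (n a) :=
  Primrec.list_drop.comp hn hf

@[fun_prop]
theorem primrec_tails {f : α → List β} (hf : Primrec f) : Primrec fun a => (f a).tails := by
  have htails (l : List β) : (List.range (l.length + 1)).map (fun n => l.drop n) = l.tails :=
    List.ext_getElem (by simp) (by simp)
  simp only [← htails]
  fun_prop

@[fun_prop]
theorem rePred_reflTransGen {r : α → β → β → Prop} {f g : α → β}
    (hr : REPred fun z : α × β × β => r z.1 z.2.1 z.2.2) (hf : Primrec f) (hg : Primrec g) :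
    REPred fun a => Relation.ReflTransGen (r a) (f a) (g a) := by
  classical
  obtain ⟨q, hq, hpq⟩ := rePred_iff_exists_primrecPred.1 hr
  let move (a : α) (b : β) (s : β × ℕ) : β := if q ((a, b, s.1), s.2) then s.1 else b
  have hmove : Primrec fun z : α × β × β × ℕ => move z.1 z.2.1 z.2.2 :=
    .ite (hq.comp (f := fun z : α × β × β × ℕ => ((z.1, z.2.1, z.2.2.1), z.2.2.2))
      (by fun_prop)) (by fun_prop) (by fun_prop)
  have hfold (a : α) (b c : β) :
      Relation.ReflTransGen (r a) b c ↔ ∃ l : List (β × ℕ), l.foldl (move a) b = c := by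
    constructor
    · intro h
      induction h with
      | refl => exact ⟨[], rfl⟩
      | @tail c d _ hcd ih =>
        obtain ⟨l, hl⟩ := ih
        obtain ⟨n, hn⟩ := (hpq (a, c, d)).1 hcd
        exact ⟨l ++ [(d, n)], by simp [hl, move, hn]⟩
    · rintro ⟨l, rfl⟩
      induction l generalizing b with
      | nil => exact .refl
      | cons s l ih =>
        refine .trans ?_ (ih (move a b s))
        by_cases hs : q ((a, b, s.1), s.2)
        · simpa [move, hs] using .single ((hpq (a, b, s.1)).2 ⟨s.2, hs⟩)
        · simpa [move, hs] using .refl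
  exact (rePred_exists (p := fun a (l : List (β × ℕ)) => l.foldl (move a) (f a) = g a) <|
    by fun_prop).of_eq fun a => (hfold a _ _).symm

theorem exists_flatMap_map_iff_sublistForall₂ {β γ : Type*} {R : β → γ → Prop}
    {l : List β} {m : List γ} :
    (∃ zs : List (List β × γ), l = zs.flatMap Prod.fst ∧ m = zs.map Prod.snd ∧
      ∀ z ∈ zs, z.1 = [] ∨ ∃ b, z.1 = [b] ∧ R b z.2) ↔ List.SublistForall₂ R l m := by
  constructor
  · rintro ⟨zs, rfl, rfl, h⟩
    induction zs with
    | nil => exact .nil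
    | cons z zs ih =>
      rw [List.forall_mem_cons] at h
      rcases h.1 with hz | ⟨b, hz, hb⟩
      · simpa [hz] using (ih h.2).cons_right
      · simpa [hz] using .cons hb (ih h.2)
  · intro h
    induction h with
    | @nil m => exact ⟨m.map fun c => ([], c), by simp [Function.comp_def]⟩
    | @cons b c l m hbc _ ih =>
      obtain ⟨zs, rfl, rfl, h⟩ := ih
      exact ⟨([b], c) :: zs, by simpa [hbc] using h⟩
    | @cons_right c l m _ ih =>
      obtain ⟨zs, rfl, rfl, h⟩ := ih
      exact ⟨([], c) :: zs, by simpa using h⟩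

@[fun_prop]
theorem primrec_sumElim {f : α → β ⊕ γ} {g : α → β → δ} {h : α → γ → δ} (hf : Primrec f)
    (hg : Primrec fun z : α × β => g z.1 z.2) (hh : Primrec fun z : α × γ => h z.1 z.2) :
    Primrec fun a => Sum.elim (g a) (h a) (f a) :=
  Primrec.sumCasesOn hf hg hh

@[fun_prop]
theorem rePred_sumElim {f : α → β ⊕ γ} {p : α → β → Prop} {q : α → γ → Prop} (hf : Primrec f)
    (hp : REPred fun z : α × β => p z.1 z.2) (hq : REPred fun z : α × γ => q z.1 z.2) :
    REPred fun a => Sum.elim (p a) (q a) (f a) := by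
  have h : REPred fun a => (∃ b, f a = .inl b ∧ p a b) ∨ ∃ c, f a = .inr c ∧ q a c := by fun_prop
  exact h.of_eq fun a => by cases f a <;> simp

@[fun_prop]
theorem primrec_take {f : α → List β} {n : α → ℕ} (hn : Primrec n) (hf : Primrec f) :
    Primrec fun a => (f a).take (n a) :=
  Primrec.list_take.comp hn hf

@[fun_prop]
theorem primrec_getElem? {f : α → List β} {n : α → ℕ} (hf : Primrec f) (hn : Primrec n) :
    Primrec fun a => (f a)[n a]? :=
  Primrec.list_getElem?.comp hf hn

/-- All ways of removing one element from a list: the element and the remaining list. -/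
def removals {β : Type*} (l : List β) : List (β × List β) :=
  (List.range l.length).flatMap fun i => l[i]?.toList.map fun b => (b, l.take i ++ l.drop (i + 1))

theorem mem_removals {β : Type*} {b : β} {l l' : List β} :
    (b, l') ∈ removals l ↔ ∃ l₁ l₂, l = l₁ ++ b :: l₂ ∧ l' = l₁ ++ l₂ := by
  constructor
  · intro h
    obtain ⟨i, -, hi, rfl, rfl⟩ : ∃ i < l.length, ∃ hi : i < l.length, l[i] = b ∧
        l.take i ++ l.drop (i + 1) = l' := by
      simpa [removals, List.getElem?_eq_some_iff] using h
    exact ⟨l.take i, l.drop (i + 1), by simp, rfl⟩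
  · rintro ⟨l₁, l₂, rfl, rfl⟩
    simp only [removals, List.mem_flatMap]
    exact ⟨l₁.length, by simp⟩

@[fun_prop]
theorem primrec_removals {f : α → List β} (hf : Primrec f) :
    Primrec fun a => removals (f a) := by
  unfold removals
  fun_prop

@[fun_prop]
theorem rePred_sublistForall₂ {R : β → γ → Prop} {f : α → List β} {g : α → List γ}
    (hR : REPred fun z : β × γ => R z.1 z.2) (hf : Primrec f) (hg : Primrec g) :
    REPred fun a => List.SublistForall₂ R (f a) (g a) := by
  simp only [← exists_flatMap_map_iff_sublistForall₂]
  fun_prop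

@[fun_prop]
theorem rePred_sublist {f g : α → List β} (hf : Primrec f) (hg : Primrec g) :
    REPred fun a => f a <+ g a := by
  have h : REPred fun a => List.SublistForall₂ Eq (f a) (g a) := by fun_prop
  simpa only [List.sublistForall₂_iff, List.forall₂_eq_eq_eq, exists_eq_left'] using h

@[fun_prop]
theorem primrec_countP_isRight {f : α → List (β ⊕ γ)} (hf : Primrec f) :
    Primrec fun a => (f a).countP Sum.isRight := by
  have h (l : List (β ⊕ γ)) : (l.flatMap (Sum.elim (fun _ => []) fun _ => [()])).length =
      l.countP Sum.isRight := by
    induction l with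
    | nil => rfl
    | cons s l ih =>
      rw [List.flatMap_cons, List.length_append, ih, List.countP_cons, add_comm]
      cases s <;> rfl
  simp only [← h]
  fun_prop

end Enumerability

section ListConfigurations

variable {Q Γ : Type*}

/-- A thread: stack content and switch number. -/
abbrev Thread (Γ : Type*) := List Γ × ℕ

/-- Configurations whose pending threads are kept in a list, so that they can be encoded. -/
abbrev LConf (Q Γ : Type*) := Q × Option (Thread Γ) × List (Thread Γ)

/-- The steps of `T_{[0,k]}(M)` on list configurations. -/
inductive LStep (M : DCPS Q Γ) (k : ℕ) : LConf Q Γ → LConf Q Γ → Prop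
  | cr {q γ q' u α w i V} : i ≤ k → Rule.cr q γ q' u α ∈ M.rules →
      LStep M k (q, some (γ :: w, i), V)
        (q', some (u ++ w, i), α.toList.map (fun a => ([a], i + 1)) ++ V)
  | intr {q γ q' u w i V} : i ≤ k → Rule.intr q γ q' u ∈ M.rules →
      LStep M k (q, some (γ :: w, i), V) (q', none, (u ++ w, i + 1) :: V)
  | res {q γ q' w i V₁ V₂} : i ≤ k → Rule.res q γ q' ∈ M.rules →
      LStep M k (q, none, V₁ ++ (γ :: w, i) :: V₂) (q', some (γ :: w, i), V₁ ++ V₂)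

/-- The initial configuration as a list configuration. -/
def initLConf (M : DCPS Q Γ) : LConf Q Γ := (M.q0, none, [([M.γ0], 0)])

/-- The pending threads of a list configuration as a finitely supported multiset. -/
noncomputable def idleOf (V : List (Thread Γ)) : Thread Γ →₀ ℕ :=
  (V.map fun th => Finsupp.single th 1).sum

/-- The configuration represented by a list configuration. -/
noncomputable def LConf.toConfig (c : LConf Q Γ) : Config Q Γ := ⟨c.1, c.2.1, idleOf c.2.2⟩

@[simp]
theorem idleOf_cons (th : Thread Γ) (V : List (Thread Γ)) :
    idleOf (th :: V) = idleOf V + Finsupp.single th 1 := by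
  simp [idleOf, add_comm]

@[simp]
theorem idleOf_append (V₁ V₂ : List (Thread Γ)) : idleOf (V₁ ++ V₂) = idleOf V₁ + idleOf V₂ := by
  simp [idleOf]

theorem toMultiset_idleOf (V : List (Thread Γ)) : Finsupp.toMultiset (idleOf V) = V := by
  induction V with
  | nil => simp [idleOf]
  | cons th V ih => simp [ih, Multiset.add_comm _ {th}, Multiset.singleton_add]

theorem idleOf_creation (α : Option Γ) (i : ℕ) (V : List (Thread Γ)) :
    idleOf (α.toList.map (fun a => ([a], i + 1)) ++ V) = idleOf V + spawnOf α i := by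
  cases α <;> simp [spawnOf, idleOf, add_comm]

theorem exists_append_of_idleOf_eq_add_single {V : List (Thread Γ)} {U : Thread Γ →₀ ℕ}
    {th : Thread Γ} (h : idleOf V = U + Finsupp.single th 1) :
    ∃ V₁ V₂, V = V₁ ++ th :: V₂ ∧ idleOf (V₁ ++ V₂) = U := by
  have hmem : th ∈ (V : Multiset (Thread Γ)) := by
    simp [← toMultiset_idleOf, h]
  obtain ⟨V₁, V₂, rfl⟩ := List.append_of_mem (Multiset.mem_coe.1 hmem)
  refine ⟨V₁, V₂, rfl, add_right_cancel (b := Finsupp.single th 1) ?_⟩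
  simp [← h, add_assoc]

variable {M : DCPS Q Γ} {k : ℕ}

theorem LStep.stepIn_toConfig {c c' : LConf Q Γ} (h : LStep M k c c') :
    ∃ r, StepIn M {i | i ≤ k} r c.toConfig c'.toConfig := by
  cases h with
  | @cr q γ q' u α w i V hi hr =>
    refine ⟨.cr q γ q' u α, ?_, .inl ⟨γ :: w, i, rfl, hi⟩⟩
    simpa only [LConf.toConfig, idleOf_creation] using Step.cr hr
  | @intr q γ q' u w i V hi hr =>
    refine ⟨.intr q γ q' u, ?_, .inl ⟨γ :: w, i, rfl, hi⟩⟩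
    simpa only [LConf.toConfig, idleOf_cons] using Step.intr hr
  | @res q γ q' w i V₁ V₂ hi hr =>
    refine ⟨.res q γ q', ?_, .inr ⟨γ :: w, i, rfl, hi⟩⟩
    simpa only [LConf.toConfig, idleOf_append, idleOf_cons, ← add_assoc] using Step.res hr

theorem exists_lStep_of_stepIn {c : LConf Q Γ} {d : Config Q Γ} {r : Rule Q Γ}
    (h : StepIn M {i | i ≤ k} r c.toConfig d) : ∃ c', LStep M k c c' ∧ c'.toConfig = d := by
  obtain ⟨q, a, V⟩ := c
  obtain ⟨hstep, hact⟩ := h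
  generalize hc : LConf.toConfig (q, a, V) = e at hstep hact
  cases hstep with
  | cr hr =>
    obtain ⟨rfl, rfl, rfl⟩ : _ = _ ∧ _ = _ ∧ _ = _ := by simpa [LConf.toConfig] using hc
    refine ⟨_, .cr ?_ hr, ?_⟩
    · simpa [ActiveIn, LConf.toConfig] using hact
    · simp only [LConf.toConfig, idleOf_creation]
  | intr hr =>
    obtain ⟨rfl, rfl, rfl⟩ : _ = _ ∧ _ = _ ∧ _ = _ := by simpa [LConf.toConfig] using hc
    refine ⟨_, .intr ?_ hr, ?_⟩
    · simpa [ActiveIn, LConf.toConfig] using hact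
    · simp only [LConf.toConfig, idleOf_cons]
  | res hr =>
    obtain ⟨rfl, rfl, hV⟩ : _ = _ ∧ _ = _ ∧ _ = _ := by simpa [LConf.toConfig] using hc
    obtain ⟨V₁, V₂, rfl, rfl⟩ := exists_append_of_idleOf_eq_add_single hV
    refine ⟨_, .res ?_ hr, rfl⟩
    simpa [ActiveIn, LConf.toConfig] using hact

theorem kBoundedReachable_iff {q : Q} : KBoundedReachable M k q ↔
    ∃ V, Relation.ReflTransGen (LStep M k) (initLConf M) (q, none, V) := by
  have hinit : (initLConf M).toConfig = initConfig M := by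
    simp [initLConf, LConf.toConfig, initConfig, idleOf]
  constructor
  · rintro ⟨d, hd, ha, rfl⟩
    suffices ∃ c, Relation.ReflTransGen (LStep M k) (initLConf M) c ∧ c.toConfig = d by
      obtain ⟨⟨q, a, V⟩, hc, rfl⟩ := this
      obtain rfl : a = none := ha
      exact ⟨V, hc⟩
    clear ha
    induction hd with
    | refl => exact ⟨_, .refl, hinit⟩
    | tail _ hstep ih =>
      obtain ⟨c, hc, rfl⟩ := ih
      obtain ⟨r, hr⟩ := hstep
      obtain ⟨c', hcc', rfl⟩ := exists_lStep_of_stepIn hr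
      exact ⟨c', hc.tail hcc', rfl⟩
  · rintro ⟨V, hV⟩
    have hreach : ReachesIn M {i | i ≤ k} (initLConf M).toConfig (LConf.toConfig (q, none, V)) :=
      hV.lift LConf.toConfig fun _ _ h => h.stepIn_toConfig
    exact ⟨_, hinit ▸ hreach, rfl, rfl⟩

end ListConfigurations

section ReachabilityEnumerable

theorem mem_rules_instDCPS {x : Inst} {e : RuleE} :
    decodeRule e ∈ (instDCPS x).rules ↔ e ∈ x.1 := by
  have hinj : Function.Injective decodeRule := by
    rintro (_ | _ | _) (_ | _ | _) h <;> simp_all [decodeRule, Prod.ext_iff]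
  exact (exists_congr fun _ => and_congr_right fun _ => hinj.eq_iff).trans exists_eq_right

theorem cr_mem_rules_instDCPS {x : Inst} {q γ q' : ℕ} {u : List ℕ} {α : Option ℕ} :
    Rule.cr q γ q' u α ∈ (instDCPS x).rules ↔ Sum.inl ((q, γ), (q', u), α) ∈ x.1 :=
  mem_rules_instDCPS (e := .inl ((q, γ), (q', u), α))

theorem intr_mem_rules_instDCPS {x : Inst} {q γ q' : ℕ} {u : List ℕ} :
    Rule.intr q γ q' u ∈ (instDCPS x).rules ↔ Sum.inr (.inl ((q, γ), (q', u))) ∈ x.1 :=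
  mem_rules_instDCPS (e := .inr (.inl ((q, γ), (q', u))))

theorem res_mem_rules_instDCPS {x : Inst} {q γ q' : ℕ} :
    Rule.res q γ q' ∈ (instDCPS x).rules ↔ Sum.inr (.inr (q, γ, q')) ∈ x.1 :=
  mem_rules_instDCPS (e := .inr (.inr (q, γ, q')))

theorem lStep_iff {Q Γ : Type*} {M : DCPS Q Γ} {k : ℕ} {c c' : LConf Q Γ} :
    LStep M k c c' ↔
      (∃ q γ q' u α w i V, i ≤ k ∧ Rule.cr q γ q' u α ∈ M.rules ∧ c = (q, some (γ :: w, i), V) ∧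
        c' = (q', some (u ++ w, i), α.toList.map (fun a => ([a], i + 1)) ++ V)) ∨
      (∃ q γ q' u w i V, i ≤ k ∧ Rule.intr q γ q' u ∈ M.rules ∧ c = (q, some (γ :: w, i), V) ∧
        c' = (q', none, (u ++ w, i + 1) :: V)) ∨
      ∃ q γ q' w i V₁ V₂, i ≤ k ∧ Rule.res q γ q' ∈ M.rules ∧
        c = (q, none, V₁ ++ (γ :: w, i) :: V₂) ∧ c' = (q', some (γ :: w, i), V₁ ++ V₂) := by
  constructor
  · rintro (⟨hi, hr⟩ | ⟨hi, hr⟩ | ⟨hi, hr⟩)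
    · exact .inl ⟨_, _, _, _, _, _, _, _, hi, hr, rfl, rfl⟩
    · exact .inr (.inl ⟨_, _, _, _, _, _, _, hi, hr, rfl, rfl⟩)
    · exact .inr (.inr ⟨_, _, _, _, _, _, _, hi, hr, rfl, rfl⟩)
  · rintro (⟨q, γ, q', u, α, w, i, V, hi, hr, rfl, rfl⟩ |
      ⟨q, γ, q', u, w, i, V, hi, hr, rfl, rfl⟩ | ⟨q, γ, q', w, i, V₁, V₂, hi, hr, rfl, rfl⟩)
    exacts [.cr hi hr, .intr hi hr, .res hi hr]

variable {α : Type*} [Primcodable α]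

@[fun_prop]
theorem primrec_initLConf {x : α → Inst} (hx : Primrec x) :
    Primrec fun a => initLConf (instDCPS (x a)) := by
  unfold initLConf instDCPS
  fun_prop

@[fun_prop]
theorem rePred_lStep {x : α → Inst} {k : α → ℕ} {c c' : α → LConf ℕ ℕ} (hx : Primrec x)
    (hk : Primrec k) (hc : Primrec c) (hc' : Primrec c') :
    REPred fun a => LStep (instDCPS (x a)) (k a) (c a) (c' a) := by
  simp only [lStep_iff, cr_mem_rules_instDCPS, intr_mem_rules_instDCPS,
    res_mem_rules_instDCPS]
  fun_prop

theorem rePred_kBoundedReachable : REPred fun z : ℕ × Inst =>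
    ∃ q ∈ z.2.2.2, KBoundedReachable (instDCPS z.2) z.1 q := by
  simp only [kBoundedReachable_iff]
  fun_prop

end ReachabilityEnumerable

section PushdownUnreachability

open Relation (ReflTransGen)

variable {X Γ : Type*}

/-- The steps of the pushdown system with rules `T`, on pairs of a state and a stack. -/
inductive PushStep (T : List ((X × Γ) × X × List Γ)) : X × List Γ → X × List Γ → Prop
  | mk {x γ y u w} : ((x, γ), y, u) ∈ T → PushStep T (x, γ :: w) (y, u ++ w)

theorem PushStep.append {T : List ((X × Γ) × X × List Γ)} {c c' : X × List Γ}
    (h : PushStep T c c') (w : List Γ) : PushStep T (c.1, c.2 ++ w) (c'.1, c'.2 ++ w) := by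
  obtain ⟨hT⟩ := h
  simpa only [List.cons_append, List.append_assoc] using PushStep.mk hT

theorem reflTransGen_pushStep_append {T : List ((X × Γ) × X × List Γ)} {x y : X} {u u' : List Γ}
    (h : ReflTransGen (PushStep T) (x, u) (y, u')) (w : List Γ) :
    ReflTransGen (PushStep T) (x, u ++ w) (y, u' ++ w) :=
  h.lift (fun c => (c.1, c.2 ++ w)) fun _ _ hc => hc.append w

section Saturation

variable [DecidableEq X] [DecidableEq Γ]

/-- Successors of `z` on reading `γ` in the automaton with transitions `D`; the sink `none`
stands for a run that has stopped in `f` and ignores the rest of the stack. -/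
def succs (D : List ((X × Γ) × Option X)) (f : X) (γ : Γ) (z : Option X) : List (Option X) :=
  (if z ∈ [none, some f] then [none] else []) ++
    D.flatMap fun d => if z = some d.1.1 ∧ γ = d.1.2 then [d.2] else []

/-- The states reached from those in `Z` on reading a stack in the automaton of `succs`. -/
def post (D : List ((X × Γ) × Option X)) (f : X) (Z : List (Option X)) (w : List Γ) :
    List (Option X) :=
  w.foldl (fun Z γ => Z.flatMap (succs D f γ)) Z

/-- Whether the automaton of `succs` accepts, i.e. can stop in `f`, from a state in `Z`. -/
def Accepts (D : List ((X × Γ) × Option X)) (f : X) (Z : List (Option X)) (w : List Γ) : Prop :=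
  none ∈ post D f Z w ∨ some f ∈ post D f Z w

/-- Saturation: a rule leading into a path of the automaton is itself a transition. -/
def IsSaturated (T : List ((X × Γ) × X × List Γ)) (D : List ((X × Γ) × Option X)) (f : X) : Prop :=
  ∀ t ∈ T, ∀ z ∈ post D f [some t.2.1] t.2.2, (t.1, z) ∈ D

variable {D : List ((X × Γ) × Option X)} {f : X}

theorem mem_succs {γ : Γ} {z z' : Option X} : z' ∈ succs D f γ z ↔
    (z' = none ∧ (z = none ∨ z = some f)) ∨ ∃ x, z = some x ∧ ((x, γ), z') ∈ D := by
  simp only [succs, List.mem_append, List.mem_ite_nil_right, List.mem_cons,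
    List.mem_flatMap, List.not_mem_nil, or_false]
  grind

theorem mem_post {Z : List (Option X)} {w : List Γ} {y : Option X} :
    y ∈ post D f Z w ↔ ∃ z ∈ Z, y ∈ post D f [z] w := by
  induction w generalizing Z with
  | nil => simp [post]
  | cons γ w ih =>
    simp only [post, List.foldl_cons] at ih ⊢
    rw [ih]
    simp only [ih (Z := List.flatMap _ [_]), List.mem_flatMap, List.mem_singleton,
      exists_eq_left]
    grind

theorem mem_post_cons {z y : Option X} {γ : Γ} {w : List Γ} :
    y ∈ post D f [z] (γ :: w) ↔ ∃ z' ∈ succs D f γ z, y ∈ post D f [z'] w := by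
  rw [← mem_post, post, post, List.foldl_cons, List.flatMap_singleton]

theorem accepts_iff {Z : List (Option X)} {w : List Γ} :
    Accepts D f Z w ↔ ∃ z ∈ Z, Accepts D f [z] w := by
  simp only [Accepts, mem_post (Z := Z)]
  grind

theorem accepts_append {z : Option X} {u w : List Γ} :
    Accepts D f [z] (u ++ w) ↔ ∃ y ∈ post D f [z] u, Accepts D f [y] w := by
  rw [← accepts_iff]
  simp only [Accepts, post, List.foldl_append]

theorem accepts_of_sink {z : Option X} (hz : z = none ∨ z = some f) (w : List Γ) :
    Accepts D f [z] w := by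
  induction w generalizing z with
  | nil => simpa [Accepts, post, eq_comm] using hz
  | cons γ w ih =>
    exact (accepts_append (u := [γ])).2 ⟨none, mem_post_cons.2
      ⟨none, mem_succs.2 (.inl ⟨rfl, hz⟩), by simp [post]⟩, ih (.inl rfl)⟩

theorem IsSaturated.accepts {T : List ((X × Γ) × X × List Γ)} (hD : IsSaturated T D f)
    {x : X} {w w' : List Γ} (h : ReflTransGen (PushStep T) (x, w) (f, w')) :
    Accepts D f [some x] w := by
  generalize hc : (x, w) = c at h
  induction h using ReflTransGen.head_induction_on generalizing x w with
  | refl => cases hc; exact accepts_of_sink (.inr rfl) _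
  | head hstep _ ih =>
    cases hstep with
    | @mk x γ y u w hT =>
      cases hc
      obtain ⟨z, hz, hacc⟩ := accepts_append.1 (ih rfl)
      exact (accepts_append (u := [γ])).2
        ⟨z, mem_post_cons.2 ⟨z, mem_succs.2 (.inr ⟨_, rfl, hD _ hT z hz⟩), by simp [post]⟩, hacc⟩

end Saturation

/-- The meaning of a path of the saturated automaton: reading `w` from `z` it may end in `z'`. -/
def Leads (T : List ((X × Γ) × X × List Γ)) (f : X) (w : List Γ) : Option X → Option X → Prop
  | none, z' => z' = none
  | some x, none => ∃ w', ReflTransGen (PushStep T) (x, w) (f, w')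
  | some x, some y => ReflTransGen (PushStep T) (x, w) (y, [])

theorem leads_append {T : List ((X × Γ) × X × List Γ)} {f : X} {u w : List Γ} {z y z' : Option X}
    (hu : Leads T f u z y) (hw : Leads T f w y z') : Leads T f (u ++ w) z z' := by
  match z, y, z', hu, hw with
  | none, none, none, _, _ => rfl
  | some x, none, none, ⟨v, hv⟩, _ => exact ⟨v ++ w, reflTransGen_pushStep_append hv w⟩
  | some x, some y, none, hu, ⟨v, hv⟩ =>
    exact ⟨v, (reflTransGen_pushStep_append hu w).trans hv⟩
  | some x, some y, some y', hu, hw => exact (reflTransGen_pushStep_append hu w).trans hw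

variable [DecidableEq X] [DecidableEq Γ] {T : List ((X × Γ) × X × List Γ)}
  {D : List ((X × Γ) × Option X)} {f : X}

theorem leads_of_mem_post (hD : ∀ d ∈ D, Leads T f [d.1.2] (some d.1.1) d.2) {w : List Γ}
    {z z' : Option X} (h : z' ∈ post D f [z] w) : Leads T f w z z' := by
  induction w generalizing z with
  | nil =>
    obtain rfl : z' = z := by simpa [post] using h
    cases z' with
    | none => rfl
    | some x => exact .refl
  | cons γ w ih =>
    obtain ⟨y, hy, hz'⟩ := mem_post_cons.1 h
    refine leads_append (u := [γ]) ?_ (ih hz')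
    rcases mem_succs.1 hy with ⟨rfl, rfl | rfl⟩ | ⟨x, rfl, hx⟩
    exacts [rfl, ⟨_, .refl⟩, hD _ hx]

theorem mem_of_mem_post {C : Set (Option X)} (hnone : none ∈ C) (hD : ∀ d ∈ D, d.2 ∈ C)
    {w : List Γ} {z z' : Option X} (hz : z ∈ C) (h : z' ∈ post D f [z] w) : z' ∈ C := by
  induction w generalizing z with
  | nil => simp_all [post]
  | cons γ w ih =>
    obtain ⟨y, hy, hz'⟩ := mem_post_cons.1 h
    rcases mem_succs.1 hy with ⟨rfl, -⟩ | ⟨x, rfl, hx⟩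
    exacts [ih hnone hz', ih (hD _ hx) hz']

theorem exists_isSaturated (T : List ((X × Γ) × X × List Γ)) (f : X) :
    ∃ D, IsSaturated T D f ∧ ∀ d ∈ D, Leads T f [d.1.2] (some d.1.1) d.2 := by
  let C : Set (Option X) := {z | z ∈ none :: T.map fun t => some t.2.1}
  let facts : Set ((X × Γ) × Option X) := {d | d.1 ∈ T.map Prod.fst} ∩ {d | d.2 ∈ C}
  have hfin : facts.Finite :=
    ((List.finite_toSet (T.map Prod.fst)).prod (List.finite_toSet (none :: T.map _))).subset
      fun d hd => hd
  obtain ⟨D, hD⟩ : ∃ D : List ((X × Γ) × Option X),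
      ∀ d, d ∈ D ↔ Leads T f [d.1.2] (some d.1.1) d.2 ∧ d ∈ facts :=
    ⟨(hfin.inter_of_right {d | Leads T f [d.1.2] (some d.1.1) d.2}).toFinset.toList, by simp⟩
  refine ⟨D, fun t ht z hz => (hD _).2 ⟨?_, List.mem_map_of_mem (f := Prod.fst) ht, ?_⟩,
    fun d hd => ((hD d).1 hd).1⟩
  · have hstep : ReflTransGen (PushStep T) (t.1.1, [t.1.2]) (t.2.1, t.2.2) := by
      simpa using ReflTransGen.single (PushStep.mk (w := []) ht)
    have hleads := leads_of_mem_post (fun d hd => ((hD d).1 hd).1) hz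
    cases z with
    | none => exact hleads.imp fun _ h => hstep.trans h
    | some y => exact hstep.trans hleads
  · exact mem_of_mem_post List.mem_cons_self (fun d hd => ((hD d).1 hd).2.2)
      (List.mem_cons_of_mem _ (List.mem_map_of_mem ht)) hz

theorem not_exists_reflTransGen_pushStep_iff {x : X} {w : List Γ} :
    (¬∃ w', ReflTransGen (PushStep T) (x, w) (f, w')) ↔
      ∃ D, IsSaturated T D f ∧ ¬Accepts D f [some x] w := by
  constructor
  · intro h
    obtain ⟨D, hsat, hD⟩ := exists_isSaturated T f
    refine ⟨D, hsat, ?_⟩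
    rintro (hnone | hf)
    exacts [h (leads_of_mem_post hD hnone), h ⟨_, leads_of_mem_post hD hf⟩]
  · rintro ⟨D, hsat, hacc⟩ ⟨w', hw'⟩
    exact hacc (hsat.accepts hw')

variable {α X Γ : Type*} [Primcodable α] [Primcodable X] [Primcodable Γ]

@[fun_prop]
theorem primrec_succs [DecidableEq X] [DecidableEq Γ] {D : α → List ((X × Γ) × Option X)}
    {f : α → X} {γ : α → Γ} {z : α → Option X} (hD : Primrec D) (hf : Primrec f) (hγ : Primrec γ)
    (hz : Primrec z) : Primrec fun a => succs (D a) (f a) (γ a) (z a) := by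
  unfold succs
  fun_prop

@[fun_prop]
theorem primrec_post [DecidableEq X] [DecidableEq Γ] {D : α → List ((X × Γ) × Option X)} {f : α → X}
    {Z : α → List (Option X)} {w : α → List Γ} (hD : Primrec D) (hf : Primrec f) (hZ : Primrec Z)
    (hw : Primrec w) : Primrec fun a => post (D a) (f a) (Z a) (w a) := by
  unfold post
  fun_prop

@[fun_prop]
theorem rePred_not_exists_pushStep {T : α → List ((X × Γ) × X × List Γ)} {x f : α → X}
    {w : α → List Γ} (hT : Primrec T) (hx : Primrec x) (hf : Primrec f) (hw : Primrec w) :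
    REPred fun a => ¬∃ w', ReflTransGen (PushStep (T a)) (x a, w a) (f a, w') := by
  classical
  simp only [not_exists_reflTransGen_pushStep_iff, IsSaturated, Accepts]
  fun_prop

end PushdownUnreachability

section BackwardAbstraction

open Relation (ReflTransGen)
open scoped List

variable {Q Γ : Type*}

/-- `Emits M s w t`: a thread with stack `w` can perform the schedule `t` and then be pending,
where `s` is the global state if the thread is active and `none` if it is pending. The letter
`inl a` spawns a thread `a`; `inr q` interrupts or resumes the thread in global state `q`.
A schedule need not mention every spawned thread. -/
inductive Emits (M : DCPS Q Γ) : Option Q → List Γ → List (Γ ⊕ Q) → Prop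
  | halt {w} : Emits M none w []
  | run {q γ q' u α w t} : Rule.cr q γ q' u α ∈ M.rules → Emits M (some q') (u ++ w) t →
      Emits M (some q) (γ :: w) t
  | spawn {q γ q' u a w t} : Rule.cr q γ q' u (some a) ∈ M.rules →
      Emits M (some q') (u ++ w) t → Emits M (some q) (γ :: w) (.inl a :: t)
  | interrupt {q γ q' u w t} : Rule.intr q γ q' u ∈ M.rules → Emits M none (u ++ w) t →
      Emits M (some q) (γ :: w) (.inr q' :: t)
  | resume {q γ q' w t} : Rule.res q γ q' ∈ M.rules → Emits M (some q') (γ :: w) t →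
      Emits M none (γ :: w) (.inr q :: t)

variable {M : DCPS Q Γ} {k : ℕ}

theorem Emits.of_sublist {s : Option Q} {w : List Γ} {t t' : List (Γ ⊕ Q)} (h : Emits M s w t')
    (hsub : t <+ t') (hcount : t.countP Sum.isRight = t'.countP Sum.isRight) :
    Emits M s w t := by
  have htail {l : Γ ⊕ Q} {t t' : List (Γ ⊕ Q)}
      (h : (l :: t).countP Sum.isRight = (l :: t').countP Sum.isRight) :
      t.countP Sum.isRight = t'.countP Sum.isRight := by
    simpa only [List.countP_cons, add_left_inj] using h
  have hswitch {q : Q} {t t' : List (Γ ⊕ Q)} (hsub : t <+ t') :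
      t.countP Sum.isRight ≠ (.inr q :: t').countP Sum.isRight := by
    rw [List.countP_cons_of_pos rfl]
    exact (Nat.lt_succ_of_le hsub.countP_le).ne
  induction h generalizing t with
  | halt => rw [List.sublist_nil.1 hsub]; exact .halt
  | run hr _ ih => exact .run hr (ih hsub hcount)
  | spawn hr _ ih =>
    cases hsub with
    | cons _ hsub => exact .run hr (ih hsub (by simpa using hcount))
    | cons_cons _ hsub => exact .spawn hr (ih hsub (htail hcount))
  | interrupt hr _ ih =>
    cases hsub with
    | cons _ hsub => exact absurd hcount (hswitch hsub)
    | cons_cons _ hsub => exact .interrupt hr (ih hsub (htail hcount))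
  | resume hr _ ih =>
    cases hsub with
    | cons _ hsub => exact absurd hcount (hswitch hsub)
    | cons_cons _ hsub => exact .resume hr (ih hsub (htail hcount))

/-- A token demands a thread with the given switch number and able to perform the schedule. -/
abbrev Tok (Q Γ : Type*) := ℕ × List (Γ ⊕ Q)

/-- Abstract configurations: the global state (if no thread is active) or a token for the active
thread, together with tokens for some of the pending threads. -/
abbrev AConf (Q Γ : Type*) := (Q ⊕ Tok Q Γ) × List (Tok Q Γ)

/-- Distinct threads of `V` meet the demands `E`. -/
def Supplies (M : DCPS Q Γ) (V : List (Thread Γ)) (E : List (Tok Q Γ)) : Prop :=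
  ∃ V', V' <+~ V ∧ List.Forall₂ (fun th e => th.2 = e.1 ∧ Emits M none th.1 e.2) V' E

theorem Supplies.mono {V V' : List (Thread Γ)} {E : List (Tok Q Γ)} (h : Supplies M V E)
    (hV : V <+~ V') : Supplies M V' E :=
  h.imp fun _ h => ⟨h.1.trans hV, h.2⟩

theorem supplies_nil (V : List (Thread Γ)) : Supplies M V [] :=
  ⟨[], List.nil_subperm, .nil⟩

theorem Supplies.append_cons {V₁ V₂ : List (Thread Γ)} {E₁ E₂ : List (Tok Q Γ)} {w : List Γ}
    {i : ℕ} {t : List (Γ ⊕ Q)} (h : Supplies M (V₁ ++ V₂) (E₁ ++ E₂)) (ht : Emits M none w t) :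
    Supplies M (V₁ ++ (w, i) :: V₂) (E₁ ++ (i, t) :: E₂) := by
  obtain ⟨V', hV', hrel⟩ := h
  obtain ⟨hrel₁, hrel₂⟩ := And.intro (List.forall₂_take_append _ _ _ hrel)
    (List.forall₂_drop_append _ _ _ hrel)
  refine ⟨V'.take E₁.length ++ (w, i) :: V'.drop E₁.length, ?_,
    List.rel_append hrel₁ (.cons ⟨rfl, ht⟩ hrel₂)⟩
  rw [List.perm_middle.subperm_right, List.perm_middle.subperm_left, List.subperm_cons,
    List.take_append_drop]
  exact hV'

theorem Supplies.exists_of_cons {V : List (Thread Γ)} {E : List (Tok Q Γ)} {i : ℕ}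
    {t : List (Γ ⊕ Q)} (h : Supplies M V ((i, t) :: E)) :
    ∃ V₁ w V₂, V = V₁ ++ (w, i) :: V₂ ∧ Emits M none w t ∧ Supplies M (V₁ ++ V₂) E := by
  obtain ⟨V', hV', hrel⟩ := h
  obtain ⟨⟨w, j⟩, V'', ⟨rfl, ht⟩, hrest, rfl⟩ := List.forall₂_cons_right_iff.1 hrel
  obtain ⟨V₁, V₂, rfl⟩ := List.append_of_mem (hV'.subset List.mem_cons_self)
  rw [List.perm_middle.subperm_left, List.subperm_cons] at hV'
  exact ⟨V₁, w, V₂, rfl, ht, V'', hV', hrest⟩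

theorem exists_of_forall₂_append_cons {α β : Type*} {R : α → β → Prop} {l₁ l₂ : List α} {a : α}
    {l : List β} (h : List.Forall₂ R (l₁ ++ a :: l₂) l) :
    ∃ m₁ b m₂, l = m₁ ++ b :: m₂ ∧ R a b ∧ List.Forall₂ R (l₁ ++ l₂) (m₁ ++ m₂) := by
  induction l₁ generalizing l with
  | nil =>
    obtain ⟨b, m, hab, hm, rfl⟩ := List.forall₂_cons_left_iff.1 h
    exact ⟨[], b, m, rfl, hab, hm⟩
  | cons a' l₁ ih =>
    obtain ⟨b', m, hab', hm, rfl⟩ := List.forall₂_cons_left_iff.1 h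
    obtain ⟨m₁, b, m₂, rfl, hab, hm⟩ := ih hm
    exact ⟨b' :: m₁, b, m₂, rfl, hab, .cons hab' hm⟩

theorem Supplies.of_cons {V : List (Thread Γ)} {w : List Γ} {i : ℕ} {E : List (Tok Q Γ)}
    (h : Supplies M ((w, i) :: V) E) : Supplies M V E ∨
      ∃ E₁ t E₂, E = E₁ ++ (i, t) :: E₂ ∧ Emits M none w t ∧ Supplies M V (E₁ ++ E₂) := by
  obtain ⟨V', hV', hrel⟩ := h
  by_cases hmem : (w, i) ∈ V'
  · obtain ⟨V₁, V₂, rfl⟩ := List.append_of_mem hmem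
    obtain ⟨E₁, ⟨j, t⟩, E₂, rfl, ⟨rfl, ht⟩, hrest⟩ := exists_of_forall₂_append_cons hrel
    rw [List.perm_middle.subperm_right, List.subperm_cons] at hV'
    exact .inr ⟨E₁, t, E₂, rfl, ht, V₁ ++ V₂, hV', hrest⟩
  · refine .inl ⟨V', ?_, hrel⟩
    obtain ⟨l, hl, hsub⟩ := hV'
    exact ⟨l, hl, (List.sublist_cons_iff.1 hsub).resolve_right
      fun ⟨r, hr, _⟩ => hmem (hl.subset (hr ▸ List.mem_cons_self))⟩

theorem supplies_nil_iff {E : List (Tok Q Γ)} :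
    Supplies M [] E ↔ E = [] := by
  refine ⟨fun ⟨V', hV', hE⟩ => ?_, fun hE => hE ▸ supplies_nil []⟩
  rwa [List.subperm_nil.1 hV', List.forall₂_nil_left_iff] at hE

theorem supplies_singleton_iff {w : List Γ} {i : ℕ} {E : List (Tok Q Γ)} :
    Supplies M [(w, i)] E ↔ E = [] ∨ ∃ t, E = [(i, t)] ∧ Emits M none w t := by
  constructor
  · intro h
    rcases h.of_cons with h | ⟨E₁, t, E₂, rfl, ht, h⟩
    · exact .inl (supplies_nil_iff.1 h)
    · obtain ⟨rfl, rfl⟩ := List.append_eq_nil_iff.1 (supplies_nil_iff.1 h)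
      exact .inr ⟨t, rfl, ht⟩
  · rintro (rfl | ⟨t, rfl, ht⟩)
    · exact supplies_nil _
    · exact (supplies_nil []).append_cons (V₁ := []) (E₁ := []) ht

/-- The configuration meets all demands of the abstract configuration. -/
inductive Realizes (M : DCPS Q Γ) : LConf Q Γ → AConf Q Γ → Prop
  | idle {q} {V E} : Supplies M V E → Realizes M (q, none, V) (.inl q, E)
  | active {q w i t V E} : Emits M (some q) w t → Supplies M V E →
      Realizes M (q, some (w, i), V) (.inr (i, t), E)

theorem not_realizes_initLConf_iff {b : AConf Q Γ} :
    ¬Realizes M (initLConf M) b ↔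
      (b.1 = .inl M.q0 → b.2 ≠ [] ∧
        ∀ e ∈ b.2, b.2 = [e] → e.1 = 0 → ¬Emits M none [M.γ0] e.2) := by
  obtain ⟨a, E⟩ := b
  have hr : Realizes M (initLConf M) (a, E) ↔ a = .inl M.q0 ∧ Supplies M [([M.γ0], 0)] E := by
    refine ⟨fun h => ?_, fun ⟨ha, hE⟩ => ha ▸ .idle hE⟩
    cases h with | idle hE => exact ⟨rfl, hE⟩
  rw [hr, supplies_singleton_iff, not_and, not_or]
  refine imp_congr_right fun _ => and_congr_right fun _ => ?_
  constructor
  · rintro h ⟨i, t⟩ - rfl (rfl : i = 0) ht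
    exact h ⟨t, rfl, ht⟩
  · rintro h ⟨t, rfl, ht⟩
    exact h _ List.mem_cons_self rfl rfl ht

/-- `Pred M k b' b`: meeting `b'` allows a run of `M` to meet `b` afterwards. -/
inductive Pred (M : DCPS Q Γ) (k : ℕ) : AConf Q Γ → AConf Q Γ → Prop
  | interrupt {q j E} : j ≤ k → Pred M k (.inr (j, [.inr q]), E) (.inl q, E)
  | interruptDemanded {q j t E₁ E₂} : j ≤ k →
      Pred M k (.inr (j, .inr q :: t), E₁ ++ E₂) (.inl q, E₁ ++ (j + 1, t) :: E₂)
  | resume {q γ q' j t E} : j ≤ k → Rule.res q γ q' ∈ M.rules →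
      Pred M k (.inl q, (j, .inr q :: t) :: E) (.inr (j, t), E)
  | spawn {q γ q' u a j t t' E₁ E₂} : j ≤ k → Rule.cr q γ q' u (some a) ∈ M.rules →
      Emits M none [a] t' →
      Pred M k (.inr (j, .inl a :: t), E₁ ++ E₂) (.inr (j, t), E₁ ++ (j + 1, t') :: E₂)

theorem LStep.realizes_or_pred {c c' : LConf Q Γ} {b : AConf Q Γ} (h : LStep M k c c')
    (hb : Realizes M c' b) : Realizes M c b ∨ ∃ b', Pred M k b' b ∧ Realizes M c b' := by
  cases h with
  | @cr q γ q' u α w i V hi hr =>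
    cases hb with | active ht hV =>
    cases α with
    | none => exact .inl (.active (.run hr ht) hV)
    | some a =>
      rcases hV.of_cons with hV | ⟨E₁, t', E₂, rfl, ht', hV⟩
      · exact .inl (.active (.run hr ht) hV)
      · exact .inr ⟨_, .spawn hi hr ht', .active (.spawn hr ht) hV⟩
  | intr hi hr =>
    cases hb with | idle hV =>
    rcases hV.of_cons with hV | ⟨E₁, t, E₂, rfl, ht, hV⟩
    · exact .inr ⟨_, .interrupt hi, .active (.interrupt hr .halt) hV⟩
    · exact .inr ⟨_, .interruptDemanded hi, .active (.interrupt hr ht) hV⟩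
  | res hi hr =>
    cases hb with | active ht hV =>
    exact .inr ⟨_, .resume hi hr, .idle (hV.append_cons (E₁ := []) (.resume hr ht))⟩

theorem Emits.exists_run_inr {q q' : Q} {w : List Γ} {t : List (Γ ⊕ Q)} {i : ℕ}
    (h : Emits M (some q) w (.inr q' :: t)) (hi : i ≤ k) (V : List (Thread Γ)) :
    ∃ w' V', ReflTransGen (LStep M k) (q, some (w, i), V) (q', none, (w', i + 1) :: V') ∧
      V <+~ V' ∧ Emits M none w' t := by
  generalize hs : some q = s, ht : .inr q' :: t = t' at h
  induction h generalizing q V with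
  | halt | resume => cases hs
  | spawn => cases ht
  | interrupt hr h =>
    cases hs; cases ht
    exact ⟨_, V, .single (.intr hi hr), List.Subperm.refl V, h⟩
  | @run _ γ _ u α _ _ hr _ ih =>
    cases hs
    obtain ⟨w', V', hrun, hV, h⟩ := ih (α.toList.map (fun a => ([a], i + 1)) ++ V) rfl ht
    exact ⟨w', V', .head (.cr hi hr) hrun, (List.sublist_append_right ..).subperm.trans hV, h⟩

theorem Emits.exists_run_inl {q : Q} {w : List Γ} {a : Γ} {t : List (Γ ⊕ Q)} {i : ℕ}
    (h : Emits M (some q) w (.inl a :: t)) (hi : i ≤ k) (V : List (Thread Γ)) :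
    ∃ q' w' V', ReflTransGen (LStep M k) (q, some (w, i), V)
        (q', some (w', i), ([a], i + 1) :: V') ∧
      V <+~ V' ∧ Emits M (some q') w' t := by
  generalize hs : some q = s, ht : .inl a :: t = t' at h
  induction h generalizing q V with
  | halt | resume => cases hs
  | interrupt => cases ht
  | spawn hr h =>
    cases hs; cases ht
    exact ⟨_, _, V, .single (.cr hi hr), List.Subperm.refl V, h⟩
  | @run _ γ _ u α _ _ hr _ ih =>
    cases hs
    obtain ⟨q', w', V', hrun, hV, h⟩ := ih (α.toList.map (fun a => ([a], i + 1)) ++ V) rfl ht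
    exact ⟨q', w', V', .head (.cr hi hr) hrun,
      (List.sublist_append_right ..).subperm.trans hV, h⟩

theorem Realizes.exists_run {c : LConf Q Γ} {b b' : AConf Q Γ} (hc : Realizes M c b')
    (h : Pred M k b' b) : ∃ c', ReflTransGen (LStep M k) c c' ∧ Realizes M c' b := by
  cases h with
  | interrupt hj =>
    cases hc with | active ht hE =>
    obtain ⟨w', V', hrun, hV, -⟩ := ht.exists_run_inr hj _
    exact ⟨_, hrun, .idle (hE.mono (hV.trans .cons_self))⟩
  | interruptDemanded hj =>
    cases hc with | active ht hE =>
    obtain ⟨w', V', hrun, hV, ht'⟩ := ht.exists_run_inr hj _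
    exact ⟨_, hrun, .idle ((hE.mono hV).append_cons (V₁ := []) ht')⟩
  | spawn hj _ ht' =>
    cases hc with | active ht hE =>
    obtain ⟨q', w', V', hrun, hV, ht⟩ := ht.exists_run_inl hj _
    exact ⟨_, hrun, .active ht ((hE.mono hV).append_cons (V₁ := []) ht')⟩
  | resume hj _ =>
    cases hc with | idle hE =>
    obtain ⟨V₁, w, V₂, rfl, ht, hrest⟩ := hE.exists_of_cons
    cases ht with | resume hr ht =>
    exact ⟨_, .single (.res hj hr), .active ht hrest⟩

end BackwardAbstraction

section Certificates

open Relation (ReflTransGen)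
open scoped List

variable {Q Γ : Type*} {M : DCPS Q Γ} {k : ℕ}

/-- A demand decreases when spawn letters are dropped from its schedule. -/
def TokLE (e e' : Tok Q Γ) : Prop :=
  (e.1 = e'.1 ∧ e.2.countP Sum.isRight = e'.2.countP Sum.isRight) ∧ e.2 <+ e'.2

/-- An abstract configuration decreases when demands are decreased or dropped. -/
def AConfLE (b b' : AConf Q Γ) : Prop :=
  Sum.LiftRel Eq TokLE b.1 b'.1 ∧ List.SublistForall₂ TokLE b.2 b'.2

instance : IsPreorder (Tok Q Γ) TokLE where
  refl _ := ⟨⟨rfl, rfl⟩, List.Sublist.refl _⟩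
  trans _ _ _ h h' := ⟨⟨h.1.1.trans h'.1.1, h.1.2.trans h'.1.2⟩, h.2.trans h'.2⟩

theorem Supplies.of_sublistForall₂ {V : List (Thread Γ)} {E E' : List (Tok Q Γ)}
    (h : Supplies M V E') (hE : List.SublistForall₂ TokLE E E') : Supplies M V E := by
  induction hE generalizing V with
  | nil => exact supplies_nil V
  | @cons e e' E E' he _ ih =>
    obtain ⟨j, t⟩ := e
    obtain ⟨j', t'⟩ := e'
    obtain ⟨⟨rfl : j = j', hcount⟩, hsub⟩ := he
    obtain ⟨V₁, w, V₂, rfl, ht, hV⟩ := h.exists_of_cons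
    exact (ih hV).append_cons (E₁ := []) (ht.of_sublist hsub hcount)
  | cons_right _ ih =>
    obtain ⟨V₁, w, V₂, rfl, -, hV⟩ := h.exists_of_cons
    exact ih (hV.mono ((List.sublist_cons_self ..).append_left V₁).subperm)

theorem Realizes.of_aConfLE {c : LConf Q Γ} {b b' : AConf Q Γ} (h : Realizes M c b')
    (hb : AConfLE b b') : Realizes M c b := by
  obtain ⟨a, E⟩ := b
  obtain ⟨hact, hE⟩ := hb
  cases h with
  | idle hV =>
    cases hact with | inl hq =>
    subst hq
    exact .idle (hV.of_sublistForall₂ hE)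
  | @active q w i t V E' ht hV =>
    cases hact with | @inr e _ he =>
    obtain ⟨j, t'⟩ := e
    obtain ⟨⟨rfl : j = i, hcount⟩, hsub⟩ := he
    exact .active (ht.of_sublist hsub hcount) (hV.of_sublistForall₂ hE)

/-- `B` generates an upward closed set of abstract configurations that contains the targets, is
closed under predecessors, and is not met by the initial configuration. -/
structure IsUnreachabilityCert (M : DCPS Q Γ) (k : ℕ) (F : Set Q) (B : List (AConf Q Γ)) :
    Prop where
  target : ∀ q ∈ F, ∃ b ∈ B, AConfLE b (.inl q, [])
  closed : ∀ b ∈ B, ∀ b', Pred M k b' b → ∃ b₀ ∈ B, AConfLE b₀ b'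
  not_realizes : ∀ b ∈ B, ¬Realizes M (initLConf M) b

theorem IsUnreachabilityCert.not_kBoundedReachable {F : Set Q} {B : List (AConf Q Γ)}
    (h : IsUnreachabilityCert M k F B) {q : Q} (hq : q ∈ F) : ¬KBoundedReachable M k q := by
  rw [kBoundedReachable_iff]
  rintro ⟨V, hrun⟩
  suffices ∃ b ∈ B, Realizes M (initLConf M) b by
    obtain ⟨b, hb, hr⟩ := this
    exact h.not_realizes b hb hr
  generalize initLConf M = c at hrun ⊢
  induction hrun using ReflTransGen.head_induction_on with
  | refl =>
    obtain ⟨b, hb, hle⟩ := h.target q hq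
    exact ⟨b, hb, (Realizes.idle (supplies_nil V)).of_aConfLE hle⟩
  | head hstep _ ih =>
    obtain ⟨b, hb, hr⟩ := ih
    rcases hstep.realizes_or_pred hr with hr | ⟨b', hpred, hr⟩
    · exact ⟨b, hb, hr⟩
    · obtain ⟨b₀, hb₀, hle⟩ := h.closed b hb b' hpred
      exact ⟨b₀, hb₀, hr.of_aConfLE hle⟩

theorem Realizes.exists_kBoundedReachable {b : AConf Q Γ} {q : Q}
    (h : Realizes M (initLConf M) b) (hb : ReflTransGen (Pred M k) b (.inl q, [])) :
    KBoundedReachable M k q := by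
  suffices ∃ c, ReflTransGen (LStep M k) (initLConf M) c ∧ Realizes M c (.inl q, []) by
    obtain ⟨c, hrun, hc⟩ := this
    cases hc
    exact kBoundedReachable_iff.2 ⟨_, hrun⟩
  generalize initLConf M = c₀ at h ⊢
  induction hb using ReflTransGen.head_induction_on generalizing c₀ with
  | refl => exact ⟨c₀, .refl, h⟩
  | head hpred _ ih =>
    obtain ⟨c, hrun, hc⟩ := h.exists_run hpred
    obtain ⟨c', hrun', hc'⟩ := ih c hc
    exact ⟨c', hrun.trans hrun', hc'⟩

theorem exists_list_basis_of_partiallyWellOrderedOn {α : Type*} {r : α → α → Prop} {s : Set α}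
    (hs : s.PartiallyWellOrderedOn r) :
    ∃ B : List α, (∀ b ∈ B, b ∈ s) ∧ ∀ a ∈ s, ∃ b ∈ B, r b a := by
  by_contra! h
  obtain ⟨f, hf, hbad⟩ := exists_seq_of_forall_finset_exists (· ∈ s) (fun x y => ¬r x y)
    fun t ht => by simpa using h t.toList (by simpa using ht)
  obtain ⟨m, n, hlt, hr⟩ := hs.exists_lt hf
  exact hbad m n hlt hr

theorem partiallyWellOrderedOn_of_mapsTo {α β : Type*} {r : α → α → Prop} {r' : β → β → Prop}
    {s : Set α} {t : Set β} {f : α → β} (ht : t.PartiallyWellOrderedOn r') (hf : s.MapsTo f t)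
    (hr : ∀ a b, r' (f a) (f b) → r a b) : s.PartiallyWellOrderedOn r := by
  rw [Set.partiallyWellOrderedOn_iff_exists_lt]
  intro g hg
  obtain ⟨m, n, hlt, h⟩ := ht.exists_lt fun n => hf (hg n)
  exact ⟨m, n, hlt, hr _ _ h⟩

/-- Demands with letters in `L` and weight at most `N`, where a context switch weighs `1` and
each unit of the switch number weighs `2`: the switch number increases by one with every two
switches, a resumption and an interruption, so the weight stays bounded in a backward search. -/
def boundedToks (L : Set (Γ ⊕ Q)) (N : ℕ) : Set (Tok Q Γ) :=
  {e | 2 * e.1 + e.2.countP Sum.isRight ≤ N ∧ ∀ l ∈ e.2, l ∈ L}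

theorem inr_cons_mem_boundedToks {L : Set (Γ ⊕ Q)} {N j : ℕ} {q : Q} {t : List (Γ ⊕ Q)} :
    (j, .inr q :: t) ∈ boundedToks L (N + 1) ↔ .inr q ∈ L ∧ (j, t) ∈ boundedToks L N := by
  simp only [boundedToks, Set.mem_ofPred_eq, List.countP_cons, Sum.isRight_inr, if_true,
    ← add_assoc, add_le_add_iff_right, List.forall_mem_cons]
  tauto

theorem inl_cons_mem_boundedToks {L : Set (Γ ⊕ Q)} {N j : ℕ} {a : Γ} {t : List (Γ ⊕ Q)} :
    (j, .inl a :: t) ∈ boundedToks L N ↔ .inl a ∈ L ∧ (j, t) ∈ boundedToks L N := by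
  simp only [boundedToks, Set.mem_ofPred_eq, List.countP_cons, Sum.isRight_inl, Bool.false_eq_true,
    if_false, add_zero, List.forall_mem_cons]
  tauto

theorem succ_mem_boundedToks {L : Set (Γ ⊕ Q)} {N j : ℕ} {t : List (Γ ⊕ Q)} :
    (j + 1, t) ∈ boundedToks L (N + 2) ↔ (j, t) ∈ boundedToks L N := by
  simp only [boundedToks, Set.mem_ofPred_eq, mul_add, mul_one, add_right_comm _ 2,
    add_le_add_iff_right]

theorem partiallyWellOrderedOn_boundedToks {L : Set (Γ ⊕ Q)} (hL : L.Finite) (N : ℕ) :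
    (boundedToks L N).PartiallyWellOrderedOn TokLE := by
  have hlevels : (Set.Iic N ×ˢ Set.Iic N).PartiallyWellOrderedOn Eq :=
    ((Set.finite_Iic N).prod (Set.finite_Iic N)).partiallyWellOrderedOn
  have hschedules := Set.PartiallyWellOrderedOn.partiallyWellOrderedOn_sublistForall₂ Eq
    (hL.partiallyWellOrderedOn (r := Eq))
  refine partiallyWellOrderedOn_of_mapsTo
    (f := fun e : Tok Q Γ => ((e.1, e.2.countP Sum.isRight), e.2)) (hlevels.prod hschedules)
    (fun e he => ⟨⟨?_, ?_⟩, he.2⟩) fun e e' ⟨hlevel, hsub⟩ => ⟨Prod.ext_iff.1 hlevel, ?_⟩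
  · have := he.1
    simp only [Set.mem_Iic]
    lia
  · exact le_trans (Nat.le_add_left ..) he.1
  · simpa [List.sublistForall₂_iff, List.forall₂_eq_eq_eq] using hsub

/-- Abstract configurations with letters in `L` and switch numbers bounded by `k`: this set is
closed under predecessors. -/
def boundedAConfs (L : Set (Γ ⊕ Q)) (k : ℕ) : Set (AConf Q Γ) :=
  (Sum.inl '' {q | .inr q ∈ L} ∪ Sum.inr '' boundedToks L (2 * k + 1)) ×ˢ
    {E | ∀ e ∈ E, e ∈ boundedToks L (2 * k + 2)}

theorem inl_mem_boundedAConfs {L : Set (Γ ⊕ Q)} {q : Q} {E : List (Tok Q Γ)} :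
    (.inl q, E) ∈ boundedAConfs L k ↔ .inr q ∈ L ∧ ∀ e ∈ E, e ∈ boundedToks L (2 * k + 2) := by
  simp [boundedAConfs]

theorem inr_mem_boundedAConfs {L : Set (Γ ⊕ Q)} {e : Tok Q Γ} {E : List (Tok Q Γ)} :
    (.inr e, E) ∈ boundedAConfs L k ↔
      e ∈ boundedToks L (2 * k + 1) ∧ ∀ e ∈ E, e ∈ boundedToks L (2 * k + 2) := by
  simp [boundedAConfs]

theorem partiallyWellOrderedOn_boundedAConfs {L : Set (Γ ⊕ Q)} (hL : L.Finite) (k : ℕ) :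
    (boundedAConfs L k).PartiallyWellOrderedOn AConfLE := by
  have hstates : {q : Q | .inr q ∈ L}.PartiallyWellOrderedOn Eq :=
    (hL.preimage Sum.inr_injective.injOn).partiallyWellOrderedOn
  have : IsPreorder (Q ⊕ Tok Q Γ) (Sum.LiftRel Eq TokLE) := {}
  refine .prod (.union ?_ ?_)
    (Set.PartiallyWellOrderedOn.partiallyWellOrderedOn_sublistForall₂ TokLE
      (partiallyWellOrderedOn_boundedToks hL _))
  · exact hstates.image_of_monotone_on fun _ _ _ _ h => .inl h
  · exact (partiallyWellOrderedOn_boundedToks hL _).image_of_monotone_on fun _ _ _ _ h => .inr h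

/-- The letters that a rule can contribute to a schedule. -/
def Rule.letters : Rule Q Γ → List (Γ ⊕ Q)
  | .cr _ _ _ _ α => α.toList.map .inl
  | .intr _ _ _ _ => []
  | .res q _ _ => [.inr q]

theorem Pred.mem_boundedAConfs {L : Set (Γ ⊕ Q)} {b b' : AConf Q Γ} (h : Pred M k b' b)
    (hL : ∀ r ∈ M.rules, ∀ l ∈ r.letters, l ∈ L) (hb : b ∈ boundedAConfs L k) :
    b' ∈ boundedAConfs L k := by
  cases h with
  | @interrupt q j E hj =>
    rw [inl_mem_boundedAConfs] at hb
    rw [inr_mem_boundedAConfs, inr_cons_mem_boundedToks]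
    exact ⟨⟨hb.1, by simpa [boundedToks] using hj⟩, hb.2⟩
  | interruptDemanded hj =>
    rw [inl_mem_boundedAConfs, List.forall_mem_append, List.forall_mem_cons,
      succ_mem_boundedToks] at hb
    rw [inr_mem_boundedAConfs, inr_cons_mem_boundedToks, List.forall_mem_append]
    exact ⟨⟨hb.1, hb.2.2.1⟩, hb.2.1, hb.2.2.2⟩
  | @spawn q γ q' u a j t t' E₁ E₂ hj hr ht =>
    rw [inr_mem_boundedAConfs, List.forall_mem_append, List.forall_mem_cons] at hb
    rw [inr_mem_boundedAConfs, inl_cons_mem_boundedToks, List.forall_mem_append]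
    exact ⟨⟨hL _ hr _ (by simp [Rule.letters]), hb.1⟩, hb.2.1, hb.2.2.2⟩
  | @resume q γ q' j t E hj hr =>
    have hq : .inr q ∈ L := hL _ hr _ (by simp [Rule.letters])
    rw [inr_mem_boundedAConfs] at hb
    rw [inl_mem_boundedAConfs, List.forall_mem_cons, inr_cons_mem_boundedToks]
    exact ⟨hq, ⟨hq, hb.1⟩, hb.2⟩

theorem exists_isUnreachabilityCert {F : Set Q} (hF : F.Finite) (hM : M.rules.Finite)
    (h : ∀ q ∈ F, ¬KBoundedReachable M k q) : ∃ B, IsUnreachabilityCert M k F B := by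
  set L : Set (Γ ⊕ Q) := Sum.inr '' F ∪ ⋃ r ∈ M.rules, {l | l ∈ r.letters} with hL
  have hLfin : L.Finite := (hF.image _).union (hM.biUnion fun r _ => r.letters.finite_toSet)
  set S : Set (AConf Q Γ) := {b | ∃ q ∈ F, ReflTransGen (Pred M k) b (.inl q, [])}
  have hS : S ⊆ boundedAConfs L k := by
    rintro b ⟨q, hq, hb⟩
    induction hb using ReflTransGen.head_induction_on with
    | refl => simp [boundedAConfs, hL, hq]
    | head hpred _ ih =>
      exact hpred.mem_boundedAConfs (fun r hr l hl => .inr (Set.mem_biUnion hr hl)) ih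
  obtain ⟨B, hBS, hB⟩ := exists_list_basis_of_partiallyWellOrderedOn
    ((partiallyWellOrderedOn_boundedAConfs hLfin k).mono hS)
  refine ⟨B, fun q hq => hB _ ⟨q, hq, .refl⟩, fun b hb b' hpred => ?_, fun b hb hr => ?_⟩
  · obtain ⟨q, hq, hrun⟩ := hBS b hb
    exact hB _ ⟨q, hq, .head hpred hrun⟩
  · obtain ⟨q, hq, hrun⟩ := hBS b hb
    exact h q hq (hr.exists_kBoundedReachable hrun)

end Certificates

section CertificatesEnumerable

open Relation (ReflTransGen)

/-- Pushdown rules tracking the schedule still to be performed; `moves rules t` contains those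
needed to perform a suffix of `t`. -/
def moves (rules : List RuleE) (t : List (ℕ ⊕ ℕ)) :
    List (((List (ℕ ⊕ ℕ) × Option ℕ) × ℕ) × (List (ℕ ⊕ ℕ) × Option ℕ) × List ℕ) :=
  t.tails.flatMap fun v => rules.flatMap <| Sum.elim
    (fun r => (((v, some r.1.1), r.1.2), (v, some r.2.1.1), r.2.1.2) ::
      r.2.2.toList.map fun a => (((.inl a :: v, some r.1.1), r.1.2), (v, some r.2.1.1), r.2.1.2))
    (Sum.elim
      (fun r => [(((.inr r.2.1 :: v, some r.1.1), r.1.2), (v, none), r.2.2)])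
      fun r => [(((.inr r.1 :: v, none), r.2.1), (v, some r.2.2), [r.2.1])])

theorem mem_moves {x : Inst} {t : List (ℕ ⊕ ℕ)} {m} : m ∈ moves x.1 t ↔
    ∃ v, v <:+ t ∧ (
      (∃ q γ q' u α, Rule.cr q γ q' u α ∈ (instDCPS x).rules ∧
        (m = (((v, some q), γ), (v, some q'), u) ∨
          ∃ a ∈ α, m = (((.inl a :: v, some q), γ), (v, some q'), u))) ∨
      (∃ q γ q' u, Rule.intr q γ q' u ∈ (instDCPS x).rules ∧
        m = (((.inr q' :: v, some q), γ), (v, none), u)) ∨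
      ∃ q γ q', Rule.res q γ q' ∈ (instDCPS x).rules ∧
        m = (((.inr q :: v, none), γ), (v, some q'), [γ])) := by
  simp [moves, cr_mem_rules_instDCPS, intr_mem_rules_instDCPS, res_mem_rules_instDCPS,
    eq_comm (b := m)]

theorem Emits.exists_pushStep {x : Inst} {s : Option ℕ} {w : List ℕ} {t t₀ : List (ℕ ⊕ ℕ)}
    (h : Emits (instDCPS x) s w t) (ht : t <:+ t₀) :
    ∃ w', ReflTransGen (PushStep (moves x.1 t₀)) ((t, s), w) (([], none), w') := by
  induction h with
  | halt => exact ⟨_, .refl⟩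
  | @run q γ q' u α w t hr _ ih =>
    have hmove : (((t, some q), γ), (t, some q'), u) ∈ moves x.1 t₀ :=
      mem_moves.2 ⟨t, ht, .inl ⟨q, γ, q', u, α, hr, .inl rfl⟩⟩
    exact (ih ht).imp fun _ => .head (.mk hmove)
  | @spawn q γ q' u a w t hr _ ih =>
    have ht' := (List.suffix_cons _ t).trans ht
    have hmove : (((.inl a :: t, some q), γ), (t, some q'), u) ∈ moves x.1 t₀ :=
      mem_moves.2 ⟨t, ht', .inl ⟨q, γ, q', u, a, hr, .inr ⟨a, rfl, rfl⟩⟩⟩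
    exact (ih ht').imp fun _ => .head (.mk hmove)
  | @interrupt q γ q' u w t hr _ ih =>
    have ht' := (List.suffix_cons _ t).trans ht
    have hmove : (((.inr q' :: t, some q), γ), (t, none), u) ∈ moves x.1 t₀ :=
      mem_moves.2 ⟨t, ht', .inr (.inl ⟨q, γ, q', u, hr, rfl⟩)⟩
    exact (ih ht').imp fun _ => .head (.mk hmove)
  | @resume q γ q' w t hr _ ih =>
    have ht' := (List.suffix_cons _ t).trans ht
    have hmove : (((.inr q :: t, none), γ), (t, some q'), [γ]) ∈ moves x.1 t₀ :=
      mem_moves.2 ⟨t, ht', .inr (.inr ⟨q, γ, q', hr, rfl⟩)⟩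
    exact (ih ht').imp fun _ => .head (.mk hmove)

theorem emits_of_pushStep {x : Inst} {s : Option ℕ} {w w' : List ℕ} {t t₀ : List (ℕ ⊕ ℕ)}
    (h : ReflTransGen (PushStep (moves x.1 t₀)) ((t, s), w) (([], none), w')) :
    Emits (instDCPS x) s w t := by
  generalize hc : ((t, s), w) = c at h
  induction h using ReflTransGen.head_induction_on generalizing t s w with
  | refl => cases hc; exact .halt
  | head hstep _ ih =>
    obtain ⟨hmove⟩ := hstep
    obtain ⟨v, -, ⟨q, γ, q', u, α, hr, hm | ⟨a, rfl, hm⟩⟩ | ⟨q, γ, q', u, hr, hm⟩ |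
      ⟨q, γ, q', hr, hm⟩⟩ := mem_moves.1 hmove <;> cases hm <;> cases hc
    exacts [.run hr (ih rfl), .spawn hr (ih rfl), .interrupt hr (ih rfl), .resume hr (ih rfl)]

theorem emits_iff_exists_pushStep {x : Inst} {s : Option ℕ} {w : List ℕ} {t : List (ℕ ⊕ ℕ)} :
    Emits (instDCPS x) s w t ↔
      ∃ w', ReflTransGen (PushStep (moves x.1 t)) ((t, s), w) (([], none), w') :=
  ⟨fun h => h.exists_pushStep List.suffix_rfl, fun ⟨_, h⟩ => emits_of_pushStep h⟩

variable {α : Type*} [Primcodable α]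

@[fun_prop]
theorem primrec_moves {rules : α → List RuleE} {t : α → List (ℕ ⊕ ℕ)} (hrules : Primrec rules)
    (ht : Primrec t) : Primrec fun a => moves (rules a) (t a) := by
  unfold moves
  fun_prop

@[fun_prop]
theorem rePred_not_emits {x : α → Inst} {s : α → Option ℕ} {w : α → List ℕ}
    {t : α → List (ℕ ⊕ ℕ)} (hx : Primrec x) (hs : Primrec s) (hw : Primrec w) (ht : Primrec t) :
    REPred fun a => ¬Emits (instDCPS (x a)) (s a) (w a) (t a) := by
  simp only [emits_iff_exists_pushStep]
  fun_prop

@[fun_prop]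
theorem rePred_tokLE {e e' : α → Tok ℕ ℕ} (he : Primrec e) (he' : Primrec e') :
    REPred fun a => TokLE (e a) (e' a) := by
  unfold TokLE
  fun_prop

@[fun_prop]
theorem rePred_aConfLE {b b' : α → AConf ℕ ℕ} (hb : Primrec b) (hb' : Primrec b') :
    REPred fun a => AConfLE (b a) (b' a) := by
  unfold AConfLE
  simp only [Sum.liftRel_iff]
  fun_prop

theorem forall_pred_inl_iff {Q Γ : Type*} {M : DCPS Q Γ} {k : ℕ} {q : Q} {E : List (Tok Q Γ)}
    {p : AConf Q Γ → Prop} : (∀ b, Pred M k b (.inl q, E) → p b) ↔ ∀ j ∈ List.range (k + 1),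
      p (.inr (j, [.inr q]), E) ∧
      ∀ z ∈ removals E, z.1.1 = j + 1 → p (.inr (j, .inr q :: z.1.2), z.2) := by
  simp only [List.mem_range, Nat.lt_succ_iff]
  constructor
  · intro h j hj
    refine ⟨h _ (.interrupt hj), ?_⟩
    rintro ⟨⟨i, t⟩, E'⟩ hz (rfl : i = j + 1)
    obtain ⟨E₁, E₂, rfl, rfl⟩ := mem_removals.1 hz
    exact h _ (.interruptDemanded hj)
  · rintro h _ (hj | hj)
    exacts [(h _ hj).1, (h _ hj).2 _ (mem_removals.2 ⟨_, _, rfl, rfl⟩) rfl]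

theorem forall_pred_inr_iff {x : Inst} {k j : ℕ} {t : List (ℕ ⊕ ℕ)} {E : List (Tok ℕ ℕ)}
    {p : AConf ℕ ℕ → Prop} : (∀ b, Pred (instDCPS x) k b (.inr (j, t), E) → p b) ↔
      (j ≤ k → ∀ r ∈ x.1, Sum.elim
        (fun r => ∀ a ∈ r.2.2.toList, ∀ z ∈ removals E, z.1.1 = j + 1 →
          ¬Emits (instDCPS x) none [a] z.1.2 ∨ p (.inr (j, .inl a :: t), z.2))
        (Sum.elim (fun _ => True) fun r => p (.inl r.1, (j, .inr r.1 :: t) :: E)) r) := by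
  constructor
  · rintro h hj (⟨⟨q, γ⟩, ⟨q', u⟩, α⟩ | _ | ⟨q, γ, q'⟩) hr
    · rintro a ha ⟨⟨i, t'⟩, E'⟩ hz (rfl : i = j + 1)
      obtain ⟨E₁, E₂, rfl, rfl⟩ := mem_removals.1 hz
      obtain rfl : α = some a := by simpa using ha
      exact imp_iff_not_or.1 fun ht' => h _ (.spawn hj (cr_mem_rules_instDCPS.2 hr) ht')
    · trivial
    · exact h _ (.resume hj (res_mem_rules_instDCPS.2 hr))
  · rintro h _ (_ | _ | ⟨hj, hr⟩ | ⟨hj, hr, ht'⟩)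
    · exact h hj _ (res_mem_rules_instDCPS.1 hr)
    · exact (h hj _ (cr_mem_rules_instDCPS.1 hr) _ (by simp) _
        (mem_removals.2 ⟨_, _, rfl, rfl⟩) rfl).resolve_left (not_not_intro ht')

@[fun_prop]
theorem rePred_forall_pred {x : α → Inst} {k : α → ℕ} {b : α → AConf ℕ ℕ}
    {p : α → AConf ℕ ℕ → Prop} (hx : Primrec x) (hk : Primrec k) (hb : Primrec b)
    (hp : REPred fun z : α × AConf ℕ ℕ => p z.1 z.2) :
    REPred fun a => ∀ b', Pred (instDCPS (x a)) (k a) b' (b a) → p a b' := by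
  have h : REPred fun a => Sum.elim
      (fun q => ∀ b', Pred (instDCPS (x a)) (k a) b' (.inl q, (b a).2) → p a b')
      (fun e => ∀ b', Pred (instDCPS (x a)) (k a) b' (.inr (e.1, e.2), (b a).2) → p a b')
      (b a).1 := by
    simp only [forall_pred_inl_iff, forall_pred_inr_iff]
    fun_prop
  refine h.of_eq fun a => ?_
  generalize b a = b
  obtain ⟨q | e, E⟩ := b <;> rfl

theorem rePred_isUnreachabilityCert :
    REPred fun z : (ℕ × Inst) × List (AConf ℕ ℕ) =>
      IsUnreachabilityCert (instDCPS z.1.2) z.1.1 {q | q ∈ z.1.2.2.2} z.2 := by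
  have h : REPred fun z : (ℕ × Inst) × List (AConf ℕ ℕ) =>
      (∀ q ∈ z.1.2.2.2, ∃ b ∈ z.2, AConfLE b (.inl q, [])) ∧
      (∀ b ∈ z.2, ∀ b', Pred (instDCPS z.1.2) z.1.1 b' b → ∃ b₀ ∈ z.2, AConfLE b₀ b') ∧
      ∀ b ∈ z.2, ¬Realizes (instDCPS z.1.2) (initLConf (instDCPS z.1.2)) b := by
    simp only [not_realizes_initLConf_iff]
    unfold instDCPS
    fun_prop
  exact h.of_eq fun z => ⟨fun ⟨h₁, h₂, h₃⟩ => ⟨h₁, h₂, h₃⟩, fun ⟨h₁, h₂, h₃⟩ => ⟨h₁, h₂, h₃⟩⟩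

end CertificatesEnumerable

theorem rePred_not_kBoundedReachable :
    REPred fun z : ℕ × Inst => ¬∃ q ∈ z.2.2.2, KBoundedReachable (instDCPS z.2) z.1 q := by
  have h : REPred fun z : ℕ × Inst =>
      ∃ B, IsUnreachabilityCert (instDCPS z.2) z.1 {q | q ∈ z.2.2.2} B :=
    rePred_exists rePred_isUnreachabilityCert
  refine h.of_eq fun z => ?_
  constructor
  · rintro ⟨B, hB⟩ ⟨q, hq, hreach⟩
    exact hB.not_kBoundedReachable hq hreach
  · intro h
    have hrules : (instDCPS z.2).rules.Finite := z.2.1.finite_toSet.image decodeRule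
    exact exists_isUnreachabilityCert z.2.2.2.finite_toSet hrules fun q hq hreach =>
      h ⟨q, hq, hreach⟩

theorem bsrK_decidable_general : ComputablePred fun z : ℕ × Inst =>
    ∃ q ∈ z.2.2.2, KBoundedReachable (instDCPS z.2) z.1 q :=
  ComputablePred.computable_iff_re_compl_re'.2
    ⟨rePred_kBoundedReachable, rePred_not_kBoundedReachable⟩

/-- For every `k`, the `k`-bounded state reachability problem for
DCPSs is decidable: there is an algorithm which, given a DCPS `M` and a target set
`F`, decides whether some `q ∈ F` is `k`-bounded reachable by `M`. -/
theorem bsrK_decidable (k : ℕ) :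
    ComputablePred (fun x : Inst => ∃ q ∈ x.2.2, KBoundedReachable (instDCPS x) k q) :=
  .computable_of_manyOneReducible ⟨fun x => (k, x), (Computable.const k).pair .id, fun _ => .rfl⟩
    bsrK_decidable_general

end DCPSFormal
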